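/- For every integer ℓ ≥ 1, the map φ_ℓ that sends a non-crossing partition π of {1,…,ℓ} to the ℓ-tuple (s_1,…,s_ℓ) defined by s_i = |B| if i is the largest element of a block B of π and s_i = 0 otherwise, is a bijection from NC(ℓ) onto S(ℓ). -/

import Mathlib

/-- A finite partition of `{0,…,ℓ-1}` (i.e. of `Fin ℓ`) is non-crossing if there are no
`a < b < c < d` with `a, c` in one block and `b, d` in a different block. -/
def IsNonCrossing {ℓ : ℕ} (π : Finpartition (Finset.univ : Finset (Fin ℓ))) : Prop :=
  ∀ a b c d : Fin ℓ, a < b → b < c → c < d →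
    ∀ B₁ ∈ π.parts, ∀ B₂ ∈ π.parts, a ∈ B₁ → c ∈ B₁ → b ∈ B₂ → d ∈ B₂ → B₁ = B₂

/-- `S(ℓ)`: tuples `(s_1,…,s_ℓ)` of nonnegative integers whose partial sums satisfy
`s_1 + ⋯ + s_m ≤ m` for every `m ∈ {1,…,ℓ}` and with `s_1 + ⋯ + s_ℓ = ℓ`
(here indexed by `Fin ℓ`, zero-based). -/
def Sset (ℓ : ℕ) : Set (Fin ℓ → ℕ) :=
  {s | (∀ m : Fin ℓ, ∑ j ∈ Finset.univ.filter (fun j => j ≤ m), s j ≤ (m : ℕ) + 1) ∧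
        ∑ j, s j = ℓ}

/-- The map `φ_ℓ` sending a partition `π` of `Fin ℓ` to the tuple `(s_i)` with
`s_i = |B|` if `i` is the largest element of the block `B` of `π` containing it,
and `s_i = 0` otherwise. -/
def phiNC {ℓ : ℕ} (π : Finpartition (Finset.univ : Finset (Fin ℓ))) : Fin ℓ → ℕ :=
  fun i => ∑ B ∈ π.parts, if i ∈ B ∧ ∀ j ∈ B, j ≤ i then B.card else 0

/-!
Process `0, …, ℓ - 1` in order, pushing each element onto a stack and then popping `s i` elements
at time `i`; `S(ℓ)` consists of the sequences `s` for which the stack never underflows and ends up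
empty. If `s = φ(π)`, each block is due to be popped when its maximum is processed, and `π` is
non-crossing exactly when at that moment the block is on top of the stack. Hence the maximum of the
block of `x` is the first time at which the stack is again no higher than before `x` was pushed.
This time depends on `s` only, which gives injectivity; grouping the elements by this time for an
arbitrary `s ∈ S(ℓ)` gives surjectivity.
-/

open Finset

section BlockMax

variable {α : Type*} [Fintype α] [LinearOrder α] (π : Finpartition (univ : Finset α)) {x y : α}

/-- The largest element of the block of `π` that contains `x`. -/
def blockMax (x : α) : α :=
  (π.part x).max' ⟨x, π.mem_part (mem_univ x)⟩

lemma blockMax_mem_part (x : α) : blockMax π x ∈ π.part x :=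
  max'_mem _ _

lemma le_blockMax (x : α) : x ≤ blockMax π x :=
  le_max' _ _ (π.mem_part (mem_univ x))

lemma part_eq_part_of_mem (h : y ∈ π.part x) : π.part y = π.part x :=
  (π.mem_part_iff_part_eq_part (mem_univ y) (mem_univ x)).1 h

lemma blockMax_eq_blockMax_iff_mem_part : blockMax π y = blockMax π x ↔ y ∈ π.part x := by
  constructor
  · intro h
    have hx := part_eq_part_of_mem π (blockMax_mem_part π x)
    have hy := part_eq_part_of_mem π (blockMax_mem_part π y)
    rw [← hx, ← h, hy]
    exact π.mem_part (mem_univ y)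
  · intro h
    simp only [blockMax, part_eq_part_of_mem π h]

lemma blockMax_blockMax (x : α) : blockMax π (blockMax π x) = blockMax π x :=
  (blockMax_eq_blockMax_iff_mem_part π).2 (blockMax_mem_part π x)

lemma blockMax_eq_self_iff : blockMax π x = x ↔ ∀ y ∈ π.part x, y ≤ x :=
  ⟨fun h _ hy ↦ (le_max' _ _ hy).trans_eq h,
    fun h ↦ (h _ (blockMax_mem_part π x)).antisymm (le_blockMax π x)⟩

lemma part_eq_filter_blockMax (x : α) :
    π.part x = ({y | blockMax π y = blockMax π x} : Finset α) := by
  ext y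
  simp [blockMax_eq_blockMax_iff_mem_part]

lemma parts_eq_image_part : π.parts = univ.image π.part := by
  ext B
  simp only [mem_image, mem_univ, true_and]
  constructor
  · intro hB
    obtain ⟨x, -, hx⟩ := π.part_surjOn hB
    exact ⟨x, hx⟩
  · rintro ⟨x, rfl⟩
    exact π.part_mem.2 (mem_univ x)

lemma blockMax_injective :
    Function.Injective (blockMax : Finpartition (univ : Finset α) → α → α) := by
  intro π π' h
  have hpart : π.part = π'.part := by
    funext x
    rw [part_eq_filter_blockMax, part_eq_filter_blockMax, h]
  exact Finpartition.ext (by rw [parts_eq_image_part, parts_eq_image_part, hpart])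

lemma blockMax_ofSetoid_ker {f : α → α} [DecidableRel (Setoid.ker f)] (le_map : ∀ x, x ≤ f x)
    (idem : ∀ x, f (f x) = f x) :
    blockMax (Finpartition.ofSetoid (Setoid.ker f)) = f := by
  have mem_part {x y : α} : y ∈ (Finpartition.ofSetoid (Setoid.ker f)).part x ↔ f x = f y :=
    Finpartition.mem_part_ofSetoid_iff_rel
  funext x
  apply le_antisymm
  · rw [mem_part.1 (blockMax_mem_part _ x)]
    exact le_map _
  · exact le_max' _ _ (mem_part.2 (idem x).symm)

end BlockMax

variable {ℓ : ℕ}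

section Partition

variable {π : Finpartition (univ : Finset (Fin ℓ))}

lemma isNonCrossing_iff_blockMax_le_blockMax :
    IsNonCrossing π ↔ ∀ x y, x ≤ y → y ≤ blockMax π x → blockMax π y ≤ blockMax π x := by
  constructor
  · intro hπ x y hxy hyx
    by_contra! hlt
    have hne : x ≠ y := by
      rintro rfl
      exact hlt.false
    have hne' : y ≠ blockMax π x := by
      rintro rfl
      exact hlt.ne (blockMax_blockMax π x).symm
    have hpart := hπ x y (blockMax π x) (blockMax π y) (hxy.lt_of_ne hne) (hyx.lt_of_ne hne') hlt
      _ (π.part_mem.2 (mem_univ x)) _ (π.part_mem.2 (mem_univ y))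
      (π.mem_part (mem_univ x)) (blockMax_mem_part π x)
      (π.mem_part (mem_univ y)) (blockMax_mem_part π y)
    exact hlt.ne ((blockMax_eq_blockMax_iff_mem_part π).2 (hpart ▸ π.mem_part (mem_univ x)))
  · intro hnest a b c d hab hbc hcd B₁ hB₁ B₂ hB₂ ha hc hb hd
    obtain rfl := π.part_eq_of_mem hB₁ ha
    obtain rfl := π.part_eq_of_mem hB₂ hb
    have hca := (blockMax_eq_blockMax_iff_mem_part π).2 hc
    have hdb := (blockMax_eq_blockMax_iff_mem_part π).2 hd
    have hba : blockMax π b ≤ blockMax π a :=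
      hnest a b hab.le (hbc.le.trans (hca ▸ le_blockMax π c))
    have hcb : blockMax π c ≤ blockMax π b :=
      hnest b c hbc.le (hcd.le.trans (hdb ▸ le_blockMax π d))
    have hab_eq : blockMax π a = blockMax π b := (hca ▸ hcb).antisymm hba
    exact part_eq_part_of_mem π ((blockMax_eq_blockMax_iff_mem_part π).1 hab_eq)

variable (π)

lemma phiNC_apply (i : Fin ℓ) : phiNC π i = #{x | blockMax π x = i} := by
  have hsum : phiNC π i = if ∀ j ∈ π.part i, j ≤ i then #(π.part i) else 0 := by
    rw [phiNC, sum_eq_single_of_mem (π.part i) (π.part_mem.2 (mem_univ i))]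
    · simp only [π.mem_part (mem_univ i), true_and]
    · intro B hB hne
      exact if_neg fun h ↦ hne (π.part_eq_of_mem hB h.1).symm
  rw [hsum]
  split_ifs with hmax
  · rw [part_eq_filter_blockMax, (blockMax_eq_self_iff π).2 hmax]
  · symm
    rw [card_eq_zero, filter_eq_empty_iff]
    rintro x - rfl
    exact hmax ((blockMax_eq_self_iff π).1 (blockMax_blockMax π x))

lemma sum_phiNC (p : Fin ℓ → Prop) [DecidablePred p] :
    ∑ j with p j, phiNC π j = #{x | p (blockMax π x)} := by
  simp only [phiNC_apply]
  rw [sum_card_fiberwise_eq_card_filter]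
  simp only [mem_filter, mem_univ, true_and]

end Partition

section StackHeight

/-- The height of the stack just before `m` is pushed, when each `j < m` has been pushed and
followed by `s j` pops. It is an integer so that an underflow shows up as a negative height. -/
def stackHeight (s : Fin ℓ → ℕ) (m : ℕ) : ℤ :=
  m - ∑ j : Fin ℓ with j.val < m, (s j : ℤ)

variable (s : Fin ℓ → ℕ)

lemma stackHeight_zero : stackHeight s 0 = 0 := by
  simp [stackHeight]

lemma stackHeight_succ (x : Fin ℓ) : stackHeight s (x + 1) = stackHeight s x + 1 - s x := by
  have hinsert : ({j | j.val < x + 1} : Finset (Fin ℓ)) =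
      insert x ({j | j.val < x} : Finset (Fin ℓ)) := by
    ext j
    simp only [mem_filter, mem_univ, true_and, mem_insert]
    omega
  rw [stackHeight, stackHeight, hinsert, sum_insert (by simp)]
  push_cast
  ring

lemma stackHeight_last : stackHeight s ℓ = ℓ - ∑ j, (s j : ℤ) := by
  simp [stackHeight]

lemma mem_Sset_iff_stackHeight :
    s ∈ Sset ℓ ↔ (∀ m : Fin ℓ, 0 ≤ stackHeight s (m + 1)) ∧ stackHeight s ℓ = 0 := by
  have hnonneg (m : Fin ℓ) : ∑ j with j ≤ m, s j ≤ (m : ℕ) + 1 ↔ 0 ≤ stackHeight s (m + 1) := by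
    simp only [stackHeight, Nat.lt_succ_iff, Fin.val_fin_le, sub_nonneg]
    norm_cast
  have hlast : ∑ j, s j = ℓ ↔ stackHeight s ℓ = 0 := by
    rw [stackHeight_last, sub_eq_zero, eq_comm]
    norm_cast
  simp only [Sset, Set.mem_ofPred_eq, hnonneg, hlast]

variable {s}

lemma stackHeight_nonneg (hs : s ∈ Sset ℓ) (x : Fin ℓ) : 0 ≤ stackHeight s x := by
  obtain ⟨_ | k, hk⟩ := x
  · exact (stackHeight_zero s).ge
  · exact ((mem_Sset_iff_stackHeight s).1 hs).1 ⟨k, by omega⟩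

lemma stackHeight_phiNC (π : Finpartition (univ : Finset (Fin ℓ))) {m : ℕ} (hm : m ≤ ℓ) :
    stackHeight (phiNC π) m = #{x : Fin ℓ | x.val < m ∧ m ≤ (blockMax π x).val} := by
  have hpopped : #{x | x.val < m ∧ (blockMax π x).val < m} = #{x | (blockMax π x).val < m} :=
    congrArg card <| filter_congr fun x _ ↦
      and_iff_right_of_imp (Fin.le_def.1 (le_blockMax π x)).trans_lt
  have hsplit := card_filter_add_card_filter_not (s := {x : Fin ℓ | x.val < m})
    fun x ↦ (blockMax π x).val < m
  simp only [filter_filter, not_lt, hpopped, Fin.card_filter_val_lt, min_eq_right hm] at hsplit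
  rw [stackHeight, ← Nat.cast_sum, sum_phiNC]
  omega

lemma phiNC_mem_Sset (π : Finpartition (univ : Finset (Fin ℓ))) : phiNC π ∈ Sset ℓ := by
  rw [mem_Sset_iff_stackHeight]
  constructor
  · intro m
    rw [stackHeight_phiNC π m.isLt]
    exact Nat.cast_nonneg _
  · rw [stackHeight_phiNC π le_rfl]
    simp

end StackHeight

section PopTime

/-- `t` is the time at which `x` is popped off the stack: the first time, from `x` on, after which
the stack is no higher than it was just before `x` was pushed. -/
def IsPopTime (s : Fin ℓ → ℕ) (x t : Fin ℓ) : Prop :=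
  IsLeast {u : Fin ℓ | x ≤ u ∧ stackHeight s (u + 1) ≤ stackHeight s x} t

variable {s : Fin ℓ → ℕ} {x y t u : Fin ℓ}

lemma isPopTime_iff : IsPopTime s x t ↔ x ≤ t ∧ stackHeight s (t + 1) ≤ stackHeight s x ∧
    ∀ y, x < y → y ≤ t → stackHeight s x < stackHeight s y := by
  constructor
  · rintro ⟨⟨hxt, hle⟩, hleast⟩
    refine ⟨hxt, hle, fun y hxy hyt ↦ ?_⟩
    by_contra! hyx
    obtain ⟨_ | k, hk⟩ := y
    · exact absurd hxy (Nat.not_lt_zero _)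
    · have htk : t ≤ ⟨k, by omega⟩ := hleast ⟨Nat.lt_succ_iff.1 hxy, hyx⟩
      exact absurd (hyt.trans htk) (Nat.not_succ_le_self k)
  · rintro ⟨hxt, hle, hlt⟩
    refine ⟨⟨hxt, hle⟩, fun u ⟨hxu, hux⟩ ↦ ?_⟩
    by_contra! hut
    exact hux.not_gt (hlt ⟨u + 1, by omega⟩ (Nat.lt_succ_iff.2 hxu) hut)

lemma exists_isPopTime (h : stackHeight s ℓ ≤ stackHeight s x) : ∃ t, IsPopTime s x t := by
  have hne : {u : Fin ℓ | x ≤ u ∧ stackHeight s (u + 1) ≤ stackHeight s x}.Nonempty := by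
    refine ⟨⟨ℓ - 1, Nat.sub_one_lt_of_lt x.isLt⟩, Nat.le_sub_one_of_lt x.isLt, ?_⟩
    rwa [Nat.sub_add_cancel (Nat.one_le_of_lt x.isLt)]
  obtain ⟨t, ht⟩ := (Set.toFinite _).exists_minimal hne
  exact ⟨t, minimal_iff_isLeast.1 ht⟩

lemma IsPopTime.stackHeight_le (hx : IsPopTime s x t) (hxy : x ≤ y) (hyt : y ≤ t) :
    stackHeight s x ≤ stackHeight s y := by
  obtain rfl | hlt := hxy.eq_or_lt
  · rfl
  · exact ((isPopTime_iff.1 hx).2.2 y hlt hyt).le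

lemma IsPopTime.le_of_le_of_le (hx : IsPopTime s x t) (hy : IsPopTime s y u) (hxy : x ≤ y)
    (hyt : y ≤ t) : u ≤ t :=
  hy.2 ⟨hyt, hx.1.2.trans (hx.stackHeight_le hxy hyt)⟩

lemma isPopTime_blockMax {π : Finpartition (univ : Finset (Fin ℓ))} (hπ : IsNonCrossing π)
    (x : Fin ℓ) : IsPopTime (phiNC π) x (blockMax π x) := by
  have hnest := isNonCrossing_iff_blockMax_le_blockMax.1 hπ
  refine isPopTime_iff.2 ⟨le_blockMax π x, ?_, fun y hxy hyx ↦ ?_⟩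
  · rw [stackHeight_phiNC π (blockMax π x).isLt, stackHeight_phiNC π x.isLt.le, Nat.cast_le]
    refine card_le_card fun z hz ↦ ?_
    simp only [mem_filter, mem_univ, true_and] at hz ⊢
    have hxM := le_blockMax π x
    refine ⟨?_, by omega⟩
    by_contra! hxz
    have hzx := hnest x z hxz (by omega)
    omega
  · rw [stackHeight_phiNC π y.isLt.le, stackHeight_phiNC π x.isLt.le, Nat.cast_lt]
    refine card_lt_card ((ssubset_iff_of_subset fun z hz ↦ ?_).2 ⟨x, ?_, ?_⟩)
    · simp only [mem_filter, mem_univ, true_and] at hz ⊢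
      have hxz := hnest z x hz.1.le hz.2
      omega
    · simpa using ⟨hxy, hyx⟩
    · simp

lemma strictMonoOn_stackHeight_isPopTime :
    StrictMonoOn (fun x : Fin ℓ ↦ stackHeight s x) {x | IsPopTime s x t} :=
  fun _ hx y hy hxy ↦ (isPopTime_iff.1 hx).2.2 y hxy hy.1.1

lemma exists_isPopTime_stackHeight_eq {h : ℤ} (h_nonneg : 0 ≤ h)
    (hle : stackHeight s (t + 1) ≤ h) (hge : h ≤ stackHeight s t) :
    ∃ x, IsPopTime s x t ∧ stackHeight s x = h := by
  -- `x` is the last time up to `t` at which the stack is no higher than `h`.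
  have hne : {x : Fin ℓ | x ≤ t ∧ stackHeight s x ≤ h}.Nonempty :=
    ⟨⟨0, t.pos⟩, Nat.zero_le _, (stackHeight_zero s).trans_le h_nonneg⟩
  obtain ⟨x, ⟨hxt, hxh⟩, hmax⟩ := (Set.toFinite _).exists_maximal hne
  have hlater (y : Fin ℓ) (hxy : x < y) (hyt : y ≤ t) : h < stackHeight s y := by
    by_contra! hyh
    exact hxy.not_ge (hmax ⟨hyt, hyh⟩ hxy.le)
  have hxh_eq : stackHeight s x = h := by
    obtain rfl | hlt := hxt.eq_or_lt
    · exact hxh.antisymm hge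
    · have hnext := hlater ⟨x + 1, by omega⟩ (Nat.lt_succ_self x) hlt
      have hstep := stackHeight_succ s x
      dsimp only at hnext
      omega
  subst hxh_eq
  exact ⟨x, isPopTime_iff.2 ⟨hxt, hle, hlater⟩, rfl⟩

lemma image_stackHeight_isPopTime (ht : 0 ≤ stackHeight s (t + 1)) :
    (fun x : Fin ℓ ↦ stackHeight s x) '' {x | IsPopTime s x t} =
      Set.Icc (stackHeight s (t + 1)) (stackHeight s t) := by
  ext h
  constructor
  · rintro ⟨x, hx, rfl⟩
    exact ⟨hx.1.2, hx.stackHeight_le hx.1.1 le_rfl⟩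
  · rintro ⟨hle, hge⟩
    exact exists_isPopTime_stackHeight_eq (ht.trans hle) hle hge

lemma ncard_isPopTime (ht : 0 ≤ stackHeight s (t + 1)) : {x | IsPopTime s x t}.ncard = s t := by
  rw [← strictMonoOn_stackHeight_isPopTime.injOn.ncard_image,
    image_stackHeight_isPopTime ht, ← coe_Icc, Set.ncard_coe_finset, Int.card_Icc, stackHeight_succ]
  omega

end PopTime

lemma injOn_phiNC :
    Set.InjOn phiNC {π : Finpartition (univ : Finset (Fin ℓ)) | IsNonCrossing π} := by
  intro π hπ π' hπ' h
  refine blockMax_injective (funext fun x ↦ (isPopTime_blockMax hπ x).unique ?_)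
  rw [h]
  exact isPopTime_blockMax hπ' x

lemma surjOn_phiNC :
    Set.SurjOn phiNC {π : Finpartition (univ : Finset (Fin ℓ)) | IsNonCrossing π} (Sset ℓ) := by
  classical
  intro s hs
  obtain ⟨hnonneg, hlast⟩ := (mem_Sset_iff_stackHeight s).1 hs
  have hexists (x : Fin ℓ) : ∃ t, IsPopTime s x t :=
    exists_isPopTime (hlast.trans_le (stackHeight_nonneg hs x))
  choose popTime hpop using hexists
  have le_popTime (x : Fin ℓ) : x ≤ popTime x := (hpop x).1.1
  have hnest (x y : Fin ℓ) (hxy : x ≤ y) (hyx : y ≤ popTime x) : popTime y ≤ popTime x :=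
    (hpop x).le_of_le_of_le (hpop y) hxy hyx
  have idem (x : Fin ℓ) : popTime (popTime x) = popTime x :=
    (hnest x _ (le_popTime x) le_rfl).antisymm (le_popTime _)
  have hmax := blockMax_ofSetoid_ker le_popTime idem
  refine ⟨Finpartition.ofSetoid (Setoid.ker popTime), ?_, funext fun t ↦ ?_⟩
  · rw [Set.mem_ofPred_eq, isNonCrossing_iff_blockMax_le_blockMax, hmax]
    exact hnest
  · have hfiber : {x | popTime x = t} = {x | IsPopTime s x t} :=
      Set.ext fun x ↦ ⟨fun h ↦ h ▸ hpop x, (hpop x).unique⟩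
    rw [phiNC_apply, hmax, ← ncard_isPopTime (hnonneg t), ← hfiber, ← Set.ncard_coe_finset]
    simp

theorem stmt2 : ∀ ℓ : ℕ, 1 ≤ ℓ →
    Set.BijOn (phiNC (ℓ := ℓ))
      {π : Finpartition (Finset.univ : Finset (Fin ℓ)) | IsNonCrossing π} (Sset ℓ) := by
  intro ℓ _
  exact ⟨fun π _ ↦ phiNC_mem_Sset π, injOn_phiNC, surjOn_phiNC⟩
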